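/- Assume the Riemann Hypothesis. Let q : [1, ∞) → ℝ be a continuous real-valued function with q(x) → 0 as x → +∞. Then there exists a completely multiplicative function χ : ℕ → {1, −1} such that the function s ↦ ∫_1^∞ q(x) x^{-s} dx − ∑_p χ(p) p^{-s} log p (the sum ranging over all primes p), initially defined and analytic in the half-plane Re s > 1, extends analytically to the half-plane Re s > 1/2. -/

import Mathlib

/-!
Write `Q(x) = ∫_1^x q` and `S(x) = ∑_{p ≤ x} χ(p) log p`. Integration by parts and Abel summation give,
for `Re s > 1`,
`∫_1^∞ q(x) x^{-s} dx - ∑_p χ(p) p^{-s} log p = s ∫_1^∞ (Q(t) - S(t)) t^{-s-1} dt`,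
and the right-hand side is holomorphic in `Re s > 1 / 2` as soon as `Q(t) - S(t) = O(t ^ α)` for every
`α > 1 / 2`. So the task is to choose the signs `χ(p)` with this property; their values at composite
numbers are then forced by complete multiplicativity.

The signs are chosen greedily (`greedySign`): `χ(p) = -1` if the current error `S - Q` is positive and
`χ(p) = 1` otherwise. While the error keeps one sign it is driven towards `0` at rate `log p` per prime,
that is at rate about `1` by the prime number theorem, while `Q` moves at rate at most `1` eventually,
because `q → 0`. Hence the error is bounded by the error term of the prime number theorem plus
`O(log n)` (`abs_greedyError_le`).

It remains to derive `θ(N) = N + O(N ^ α)` for every `α > 1 / 2` from the Riemann Hypothesis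
(`abs_theta_sub_le`). The function `riemannZeta₁ s = (s - 1) ζ(s)` is entire, of polynomial growth in
`Re s ≥ 1 / 2` (`norm_riemannZeta₁_le`), and without zeros in `Re s > 1 / 2`. By the Borel–Carathéodory
theorem its logarithmic derivative is `O(‖s‖ ^ η)` in `1 / 2 + δ ≤ Re s ≤ 2` for every `η > 0`
(`norm_logDeriv_riemannZeta₁_le`). The difference of the tents `y ↦ max 0 (a - y)` for `a = N + 1` and
`a = N` is a continuous weight which sums `Λ` to exactly `ψ(N)`. Mellin inversion turns
`ψ(N) - (N - 1 / 2)` into an absolutely convergent integral of this logarithmic derivative against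
`stepMellin N` on `Re s = 2` (`psi_sub_eq_integral`), and shifting the contour to `Re s = 1 / 2 + δ`
gives the bound (`abs_psi_sub_le`).
-/

open Complex Filter Set MeasureTheory

/-- A completely multiplicative function: `χ 1 = 1` and `χ (m*n) = χ m * χ n`. -/
def CompletelyMultiplicative (χ : ℕ → ℂ) : Prop :=
  χ 1 = 1 ∧ ∀ m n : ℕ, χ (m * n) = χ m * χ n

/-! ### Mellin integrals over `(1, ∞)` and the growth of `(s - 1) ζ(s)` -/

lemma integrableOn_mul_cpow {f : ℝ → ℂ} (hf : Measurable f) {α C : ℝ}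
    (hb : ∀ t : ℝ, 1 < t → ‖f t‖ ≤ C * t ^ α) {s : ℂ} (hs : α < s.re) :
    IntegrableOn (fun t : ℝ ↦ f t * (t : ℂ) ^ (-(s + 1))) (Ioi 1) := by
  have h1 : IntegrableOn (fun t : ℝ ↦ C * t ^ (α - s.re - 1)) (Ioi 1) :=
    (integrableOn_Ioi_rpow_of_lt (by linarith) one_pos).const_mul C
  refine Integrable.mono' h1 ?_ ?_
  · refine (hf.mul ?_).aestronglyMeasurable
    exact Measurable.pow_const (by fun_prop) _
  · refine (ae_restrict_iff' measurableSet_Ioi).2 (ae_of_all _ fun t ht ↦ ?_)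
    have ht0 : (0 : ℝ) < t := one_pos.trans ht
    rw [norm_mul, norm_cpow_eq_rpow_re_of_pos ht0]
    calc ‖f t‖ * t ^ (-(s + 1)).re ≤ C * t ^ α * t ^ (-(s + 1)).re := by
          gcongr; exact hb t ht
      _ = C * t ^ (α - s.re - 1) := by
          rw [mul_assoc, ← Real.rpow_add ht0]; congr 2; simp; ring

lemma norm_integral_mul_cpow_le {f : ℝ → ℂ} {α C : ℝ}
    (hb : ∀ t : ℝ, 1 < t → ‖f t‖ ≤ C * t ^ α) {s : ℂ} (hs : α < s.re) :
    ‖∫ t in Ioi (1 : ℝ), f t * (t : ℂ) ^ (-(s + 1))‖ ≤ C / (s.re - α) := by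
  have h1 : IntegrableOn (fun t : ℝ ↦ C * t ^ (α - s.re - 1)) (Ioi 1) :=
    (integrableOn_Ioi_rpow_of_lt (by linarith) one_pos).const_mul C
  refine (norm_integral_le_of_norm_le h1 ?_).trans_eq ?_
  · refine (ae_restrict_iff' measurableSet_Ioi).2 (ae_of_all _ fun t ht ↦ ?_)
    have ht0 : (0 : ℝ) < t := one_pos.trans ht
    rw [norm_mul, norm_cpow_eq_rpow_re_of_pos ht0]
    calc ‖f t‖ * t ^ (-(s + 1)).re ≤ C * t ^ α * t ^ (-(s + 1)).re := by
          gcongr; exact hb t ht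
      _ = C * t ^ (α - s.re - 1) := by
          rw [mul_assoc, ← Real.rpow_add ht0]; congr 2; simp; ring
  · rw [integral_const_mul, integral_Ioi_rpow_of_lt (by linarith) one_pos]
    have : α - s.re ≠ 0 := by linarith
    have h2 : s.re - α ≠ 0 := by linarith
    simp only [Real.one_rpow, sub_add_cancel]
    field_simp
    ring

/-- If `f t = O(t ^ α)`, the integral `∫_1^∞ f(t) t^{-s-1} dt` is holomorphic for `Re s > α`: it is the
Mellin transform at `-s` of `f` cut off to `(1, ∞)`. -/
lemma differentiableAt_integral_mul_cpow {f : ℝ → ℂ} (hf : Measurable f) {α C : ℝ}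
    (hb : ∀ t : ℝ, 1 < t → ‖f t‖ ≤ C * t ^ α) {s : ℂ} (hs : α < s.re) :
    DifferentiableAt ℂ (fun s : ℂ ↦ ∫ t in Ioi (1 : ℝ), f t * (t : ℂ) ^ (-(s + 1))) s := by
  set g : ℝ → ℂ := (Ioi (1 : ℝ)).indicator f with hg
  have heq : (fun s : ℂ ↦ ∫ t in Ioi (1 : ℝ), f t * (t : ℂ) ^ (-(s + 1))) =
      fun s ↦ mellin g (-s) := by
    funext s
    rw [mellin, ← integral_indicator measurableSet_Ioi, ← integral_indicator measurableSet_Ioi]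
    congr 1
    funext t
    by_cases ht : 1 < t
    · have : 0 < t := one_pos.trans ht
      simp only [hg, indicator, mem_Ioi, ht, this, if_true, smul_eq_mul]
      rw [mul_comm]; congr 2; ring
    · simp [hg, indicator, ht]
  rw [heq]
  have hbg : ∀ t : ℝ, 0 < t → ‖g t‖ ≤ C * t ^ α := by
    intro t ht
    by_cases h : 1 < t
    · simpa [hg, indicator, h] using hb t h
    · have h2 := (norm_nonneg _).trans (hb 2 (by norm_num))
      have : 0 ≤ C := nonneg_of_mul_nonneg_left h2 (by positivity)
      simp only [hg, indicator, mem_Ioi, h, if_false, norm_zero]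
      positivity
  have hgm : Measurable g := hf.indicator measurableSet_Ioi
  refine DifferentiableAt.comp s (g := mellin g) (f := fun s ↦ -s) ?_ (by fun_prop)
  refine mellin_differentiableAt_of_isBigO_rpow (a := -α) (b := -s.re - 1) ?_ ?_ (by simpa using hs) ?_
    (by simp)
  · rw [locallyIntegrableOn_iff isOpen_Ioi.isLocallyClosed]
    intro k hk hkc
    refine Integrable.mono' (g := fun t ↦ C * t ^ α) ?_ hgm.aestronglyMeasurable ?_
    · refine ContinuousOn.integrableOn_compact hkc ?_
      refine continuousOn_const.mul (continuousOn_id.rpow_const fun x hx ↦ Or.inl (hk hx).ne')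
    · exact (ae_restrict_iff' hkc.measurableSet).2 (ae_of_all _ fun t ht ↦ hbg t (hk ht))
  · refine Asymptotics.IsBigO.of_bound C ?_
    filter_upwards [eventually_gt_atTop 0] with t ht
    simpa [abs_of_pos (Real.rpow_pos_of_pos ht α)] using hbg t ht
  · refine Asymptotics.IsBigO.of_bound 1 ?_
    filter_upwards [mem_nhdsWithin_of_mem_nhds (Iio_mem_nhds (one_pos : (0 : ℝ) < 1))] with t ht
    have : ¬ (1 < t) := not_lt.2 (le_of_lt (mem_Iio.1 ht))
    simp only [hg, indicator, mem_Ioi, this, if_false, norm_zero]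
    positivity

/-- Representation of `(s - 1) ζ(s)` in `Re s > 0` by the integral of the fractional part, obtained from
Abel summation for `Re s > 1` and the identity theorem. -/
lemma riemannZeta₁_eq {s : ℂ} (hs : 0 < s.re) : riemannZeta₁ s =
    s - s * (s - 1) * ∫ t in Ioi (1 : ℝ), ((Int.fract t : ℝ) : ℂ) * (t : ℂ) ^ (-(s + 1)) := by
  have hm : Measurable (fun t : ℝ ↦ ((Int.fract t : ℝ) : ℂ)) := by fun_prop
  have hb : ∀ t : ℝ, 1 < t → ‖((Int.fract t : ℝ) : ℂ)‖ ≤ 1 * t ^ (0 : ℝ) := by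
    intro t ht
    simp [abs_of_nonneg (Int.fract_nonneg t), (Int.fract_lt_one t).le]
  have hopen : IsOpen {s : ℂ | 0 < s.re} := isOpen_lt continuous_const continuous_re
  have key : EqOn riemannZeta₁ (fun s ↦ s - s * (s - 1) *
      ∫ t in Ioi (1 : ℝ), ((Int.fract t : ℝ) : ℂ) * (t : ℂ) ^ (-(s + 1))) {s : ℂ | 0 < s.re} := by
    refine AnalyticOnNhd.eqOn_of_preconnected_of_eventuallyEq (𝕜 := ℂ) (z₀ := 2) ?_ ?_ ?_ (by simp) ?_
    · exact differentiable_riemannZeta₁.differentiableOn.analyticOnNhd hopen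
    · refine DifferentiableOn.analyticOnNhd (fun z hz ↦ ?_) hopen
      have := differentiableAt_integral_mul_cpow hm hb (s := z) hz
      exact DifferentiableAt.differentiableWithinAt (by fun_prop)
    · exact (convex_halfSpace_re_gt 0).isPreconnected
    · have : ∀ᶠ z : ℂ in nhds 2, 1 < z.re :=
        (isOpen_lt continuous_const continuous_re).mem_nhds (by simp)
      filter_upwards [this] with z hz
      have hz1 : z ≠ 1 := by rintro rfl; simp at hz
      have h1 : riemannZeta₁ z = (z - 1) * riemannZeta z := by
        rw [riemannZeta_eq_inv_sub_mul hz1]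
        field_simp [sub_ne_zero.2 hz1]
      have h2 : riemannZeta z =
          z * ∫ t in Ioi (1 : ℝ), (∑ k ∈ Finset.Icc 1 ⌊t⌋₊, (1 : ℂ)) * t ^ (-(z + 1)) := by
        rw [← LSeries_one_eq_riemannZeta hz]
        refine LSeries_eq_mul_integral' 1 zero_le_one hz ?_
        refine Asymptotics.IsBigO.of_bound 1 (Eventually.of_forall fun n ↦ ?_)
        simp
      have h3 : ∫ t in Ioi (1 : ℝ), (∑ k ∈ Finset.Icc 1 ⌊t⌋₊, (1 : ℂ)) * t ^ (-(z + 1)) =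
          (∫ t in Ioi (1 : ℝ), (t : ℂ) * (t : ℂ) ^ (-(z + 1))) -
          ∫ t in Ioi (1 : ℝ), ((Int.fract t : ℝ) : ℂ) * (t : ℂ) ^ (-(z + 1)) := by
        rw [← integral_sub]
        · refine setIntegral_congr_fun measurableSet_Ioi fun t ht ↦ ?_
          have ht0 : (0 : ℝ) ≤ t := (one_pos.trans ht).le
          have : ((⌊t⌋₊ : ℝ) : ℂ) = (t : ℂ) - (Int.fract t : ℝ) := by
            rw [← ofReal_sub, Int.self_sub_fract, natCast_floor_eq_intCast_floor ht0]
          simp only [Finset.sum_const, Nat.card_Icc, nsmul_eq_mul, mul_one, add_tsub_cancel_right]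
          rw [← sub_mul, ← this]; norm_cast
        · refine integrableOn_mul_cpow (f := fun t : ℝ ↦ (t : ℂ)) (by fun_prop) (α := 1) (C := 1)
            (fun t ht ↦ ?_) hz
          simp [abs_of_pos (one_pos.trans ht)]
        · exact integrableOn_mul_cpow hm hb (by linarith)
      have h4 : ∫ t in Ioi (1 : ℝ), (t : ℂ) * (t : ℂ) ^ (-(z + 1)) = 1 / (z - 1) := by
        have : ∫ t in Ioi (1 : ℝ), (t : ℂ) * (t : ℂ) ^ (-(z + 1)) =
            ∫ t in Ioi (1 : ℝ), (t : ℂ) ^ (-z) := by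
          refine setIntegral_congr_fun measurableSet_Ioi fun t ht ↦ ?_
          have ht0 : (t : ℂ) ≠ 0 := ofReal_ne_zero.2 (one_pos.trans ht).ne'
          rw [show -(z + 1) = -z - 1 by ring, cpow_sub _ _ ht0, cpow_one]
          field_simp
        rw [this, integral_Ioi_cpow_of_lt (by simpa using hz) one_pos]
        have : -z + 1 ≠ 0 := by intro h; apply hz1; linear_combination -h
        have h' : z - 1 ≠ 0 := sub_ne_zero.2 hz1
        simp only [ofReal_one, one_cpow]
        field_simp
        ring
      rw [h1, h2, h3, h4]
      have h' : z - 1 ≠ 0 := sub_ne_zero.2 hz1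
      field_simp
  exact key hs

lemma norm_riemannZeta₁_le {s : ℂ} (hs : 1 / 2 ≤ s.re) :
    ‖riemannZeta₁ s‖ ≤ 3 * (‖s‖ + 1) ^ 2 := by
  have hb : ∀ t : ℝ, 1 < t → ‖((Int.fract t : ℝ) : ℂ)‖ ≤ 1 * t ^ (0 : ℝ) := by
    intro t ht
    simp [abs_of_nonneg (Int.fract_nonneg t), (Int.fract_lt_one t).le]
  have h1 := norm_integral_mul_cpow_le hb (s := s) (by linarith)
  have h2 : 1 / (s.re - 0) ≤ 2 := by
    rw [sub_zero, div_le_iff₀ (by linarith)]; linarith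
  have h3 : ‖s - 1‖ ≤ ‖s‖ + 1 := by simpa using norm_sub_le s 1
  rw [riemannZeta₁_eq (by linarith)]
  refine (norm_sub_le _ _).trans ?_
  rw [norm_mul, norm_mul]
  calc _ ≤ ‖s‖ + ‖s‖ * (‖s‖ + 1) * 2 := by gcongr; exact h1.trans h2
    _ ≤ _ := by nlinarith [norm_nonneg s]

/-! ### The logarithmic derivative under the Riemann Hypothesis -/

/-- Borel–Carathéodory for the logarithmic derivative of a zero-free function: a branch `g` of
`log (f / f c)` has `Re g ≤ M` on the ball, hence is bounded on smaller balls, and Cauchy's estimate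
bounds `g' = f' / f`. -/
lemma norm_logDeriv_le_of_ball {f : ℂ → ℂ} {c : ℂ} {R r M : ℝ} (hM : 0 < M) (hr : 0 ≤ r)
    (hrR : r < R) (hf : DifferentiableOn ℂ f (Metric.ball c R))
    (hf0 : ∀ z ∈ Metric.ball c R, f z ≠ 0)
    (hfM : ∀ z ∈ Metric.ball c R, ‖f z‖ ≤ ‖f c‖ * Real.exp M) {z : ℂ} (hz : ‖z - c‖ ≤ r) :
    ‖deriv f z / f z‖ ≤ 4 * M * (R + r) / (R - r) ^ 2 := by
  have hR : 0 < R := hr.trans_lt hrR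
  have hcb : c ∈ Metric.ball c R := Metric.mem_ball_self hR
  have hd : DifferentiableOn ℂ (fun z ↦ deriv f z / f z) (Metric.ball c R) :=
    (hf.deriv Metric.isOpen_ball).div hf hf0
  obtain ⟨g, hgc, hg⟩ := hd.isExactOn_ball.with_val_at c 0
  have hfd : ∀ z ∈ Metric.ball c R, HasDerivAt f (deriv f z) z := fun z hz ↦
    (hf.differentiableAt (Metric.isOpen_ball.mem_nhds hz)).hasDerivAt
  have hconst : ∀ z ∈ Metric.ball c R, f z * cexp (-g z) = f c := by
    have hh : ∀ z ∈ Metric.ball c R, HasDerivAt (fun z ↦ f z * cexp (-g z)) 0 z := by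
      intro z hz
      have h := (hfd z hz).mul (hg z hz).neg.cexp
      have h0 : deriv f z * cexp ((-g) z) + f z * (cexp ((-g) z) * -(deriv f z / f z)) = 0 := by
        have := hf0 z hz
        field_simp
        ring
      rw [h0] at h
      exact h
    intro z hz
    have h := Metric.isOpen_ball.is_const_of_deriv_eq_zero (𝕜 := ℂ)
      (convex_ball c R).isPreconnected (fun z hz ↦ (hh z hz).differentiableAt.differentiableWithinAt)
      (fun z hz ↦ (hh z hz).deriv) hz hcb
    simpa [hgc] using h
  have hre : ∀ z ∈ Metric.ball c R, (g z).re ≤ M := by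
    intro z hz
    have h1 : f z = f c * cexp (g z) := by
      rw [← hconst z hz, mul_assoc, ← Complex.exp_add]; simp
    have h2 := hfM z hz
    rw [h1, norm_mul, Complex.norm_exp] at h2
    have h3 := le_of_mul_le_mul_left h2 (norm_pos_iff.2 (hf0 c hcb))
    exact Real.exp_le_exp.1 h3
  have hbc : ∀ w : ℂ, ‖w - c‖ ≤ (R + r) / 2 → ‖g w‖ ≤ 2 * M * (R + r) / (R - r) := by
    intro w hw
    have h := borelCaratheodory_zero (f := fun z ↦ g (c + z)) (R := R) (z := w - c) hM
      (fun z hz ↦ ?_) (fun z hz ↦ ?_) hR ?_ (by simpa using hgc)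
    · simp only [add_sub_cancel] at h
      refine h.trans ?_
      rw [div_le_div_iff₀ (by linarith) (by linarith)]
      have : ‖w - c‖ * (R - r) ≤ (R + r) * (R - ‖w - c‖) := by nlinarith
      nlinarith
    · have hz' : c + z ∈ Metric.ball c R := by simpa using hz
      exact (((hg _ hz').differentiableAt).comp z (by fun_prop)).differentiableWithinAt
    · have hz' : c + z ∈ Metric.ball c R := by simpa using hz
      exact hre _ hz'
    · rw [mem_ball_zero_iff]; linarith
  have hzb : z ∈ Metric.ball c R := by rw [mem_ball_iff_norm]; linarith
  have hρ : 0 < (R - r) / 2 := by linarith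
  have hsub : ∀ w ∈ Metric.closedBall z ((R - r) / 2), ‖w - c‖ ≤ (R + r) / 2 := by
    intro w hw
    rw [mem_closedBall_iff_norm] at hw
    calc ‖w - c‖ = ‖(w - z) + (z - c)‖ := by ring_nf
      _ ≤ ‖w - z‖ + ‖z - c‖ := norm_add_le _ _
      _ ≤ _ := by linarith
  have hfin := norm_deriv_le_of_forall_mem_sphere_norm_le (f := g) (c := z)
    (C := 2 * M * (R + r) / (R - r)) hρ ?_ (fun w hw ↦ hbc w (hsub w (Metric.sphere_subset_closedBall hw)))
  · rw [(hg z hzb).deriv] at hfin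
    refine hfin.trans_eq ?_
    have : R - r ≠ 0 := by linarith
    field_simp
    ring
  · refine DifferentiableOn.diffContOnCl_ball (U := Metric.ball c R)
      (fun w hw ↦ (hg w hw).differentiableAt.differentiableWithinAt) ?_
    intro w hw
    have := hsub w hw
    rw [mem_ball_iff_norm]; linarith

/-- On `Re s = 2` the first term of the series for `ζ` dominates, as `π² / 6 - 1 < 3 / 4`. -/
lemma quarter_le_norm_riemannZeta (t : ℝ) : 1 / 4 ≤ ‖riemannZeta (2 + t * I)‖ := by
  have hre : 1 < (2 + t * I : ℂ).re := by simp
  have hterm : ∀ n : ℕ, ‖1 / ((n : ℂ) + 1) ^ (2 + t * I : ℂ)‖ = 1 / ((n : ℝ) + 1) ^ 2 := by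
    intro n
    rw [norm_div, norm_one]
    congr 1
    have h := norm_cpow_eq_rpow_re_of_pos (x := (n : ℝ) + 1) (by positivity) (2 + t * I)
    push_cast at h
    rw [h]; simp
  have hs2 : HasSum (fun n : ℕ ↦ 1 / ((n : ℝ) + 1) ^ 2) (Real.pi ^ 2 / 6) := by
    have := (hasSum_nat_add_iff' (f := fun n : ℕ ↦ 1 / (n : ℝ) ^ 2) 1).2 hasSum_zeta_two
    simpa using this
  have hs3 : HasSum (fun n : ℕ ↦ 1 / (((n + 1 : ℕ) : ℝ) + 1) ^ 2) (Real.pi ^ 2 / 6 - 1) := by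
    have := (hasSum_nat_add_iff' 1).2 hs2
    simpa using this
  have hsum : Summable (fun n : ℕ ↦ 1 / ((n : ℂ) + 1) ^ (2 + t * I : ℂ)) := by
    refine Summable.of_norm ?_
    simp_rw [hterm]; exact hs2.summable
  rw [zeta_eq_tsum_one_div_nat_add_one_cpow hre, hsum.tsum_eq_zero_add]
  have hle : ‖∑' n : ℕ, 1 / (((n + 1 : ℕ) : ℂ) + 1) ^ (2 + t * I : ℂ)‖ ≤ Real.pi ^ 2 / 6 - 1 := by
    refine tsum_of_norm_bounded hs3 fun n ↦ ?_
    rw [hterm (n + 1)]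
  have hpi : Real.pi ^ 2 < 10 := by nlinarith [Real.pi_lt_d2, Real.pi_pos]
  have h1 : (1 : ℂ) / (((0 : ℕ) : ℂ) + 1) ^ (2 + t * I : ℂ) = 1 := by simp
  rw [h1]
  have := norm_sub_le_norm_add (1 : ℂ) (∑' n : ℕ, 1 / (((n + 1 : ℕ) : ℂ) + 1) ^ (2 + t * I : ℂ))
  rw [norm_one] at this
  linarith

lemma riemannZeta₁_eq_mul {s : ℂ} (hs : s ≠ 1) : riemannZeta₁ s = (s - 1) * riemannZeta s := by
  rw [riemannZeta_eq_inv_sub_mul hs]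
  field_simp [sub_ne_zero.2 hs]

lemma riemannZeta₁_ne_zero (hRH : RiemannHypothesis) {s : ℂ} (hs : 1 / 2 < s.re) :
    riemannZeta₁ s ≠ 0 := by
  rcases eq_or_ne s 1 with rfl | h1
  · simp
  · rw [riemannZeta₁_eq_mul h1]
    refine mul_ne_zero (sub_ne_zero.2 h1) fun h0 ↦ ?_
    have := hRH s h0 ?_ h1
    · linarith
    · rintro ⟨n, rfl⟩
      have : ((-2 : ℂ) * (n + 1)).re = -2 * (n + 1) := by simp
      rw [this] at hs
      have : (0 : ℝ) ≤ n := n.cast_nonneg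
      linarith

/-- Under the Riemann Hypothesis, the logarithmic derivative of `(s - 1) ζ(s)` grows more slowly than any
power of `‖s‖` to the right of the critical line: `norm_logDeriv_le_of_ball` applies to the ball of
radius `3 / 2` around `2 + i Im s`, with `M` logarithmic in `‖s‖`. -/
lemma norm_logDeriv_riemannZeta₁_le (hRH : RiemannHypothesis) {δ η : ℝ} (hδ : 0 < δ)
    (hδ1 : δ ≤ 1) (hη : 0 < η) : ∃ C : ℝ, 0 ≤ C ∧ ∀ s : ℂ, 1 / 2 + δ ≤ s.re → s.re ≤ 2 →
      ‖deriv riemannZeta₁ s / riemannZeta₁ s‖ ≤ C * ‖s‖ ^ η := by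
  refine ⟨4 * (2 * 36 ^ η / η) * (3 - δ) / δ ^ 2, ?_, fun s hs1 hs2 ↦ ?_⟩
  · have : 0 < 3 - δ := by linarith
    positivity
  set c : ℂ := 2 + s.im * I with hc
  have hball : ∀ z ∈ Metric.ball c (3 / 2), 1 / 2 < z.re ∧ ‖z‖ ≤ ‖s‖ + 3 := by
    intro z hz
    rw [mem_ball_iff_norm] at hz
    have h1 : |(z - c).re| ≤ ‖z - c‖ := abs_re_le_norm _
    have h2 : (z - c).re = z.re - 2 := by simp [hc]
    rw [h2] at h1
    have h3 := abs_le.1 h1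
    refine ⟨by linarith, ?_⟩
    have h4 : ‖c - s‖ ≤ 3 / 2 := by
      have : c - s = ((2 - s.re : ℝ) : ℂ) := by
        apply Complex.ext <;> simp [hc]
      rw [this, norm_real, Real.norm_eq_abs, abs_of_nonneg (by linarith)]
      linarith
    calc ‖z‖ = ‖s + (z - c) + (c - s)‖ := by ring_nf
      _ ≤ ‖s‖ + ‖z - c‖ + ‖c - s‖ := norm_add₃_le
      _ ≤ _ := by linarith
  have hsn : 1 / 2 ≤ ‖s‖ := by
    have := (le_abs_self _).trans (abs_re_le_norm s)
    linarith
  have hc0 : 1 / 4 ≤ ‖riemannZeta₁ c‖ := by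
    have hc1 : c ≠ 1 := by
      intro h
      have := congrArg re h
      simp [hc] at this
    have h1 : 1 ≤ ‖c - 1‖ := by
      have := (le_abs_self _).trans (abs_re_le_norm (c - 1))
      simp only [hc] at this ⊢
      norm_num at this ⊢
      linarith
    rw [riemannZeta₁_eq_mul hc1, norm_mul]
    have := quarter_le_norm_riemannZeta s.im
    nlinarith [norm_nonneg (c - 1)]
  set M : ℝ := Real.log (12 * (‖s‖ + 4) ^ 2) with hM
  have h12 : 1 < 12 * (‖s‖ + 4) ^ 2 := by nlinarith [norm_nonneg s]
  have hMpos : 0 < M := Real.log_pos h12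
  have hMle : M ≤ 2 * 36 ^ η / η * ‖s‖ ^ η := by
    have h1 : M ≤ Real.log ((36 * ‖s‖) ^ 2) := Real.log_le_log (by linarith) (by nlinarith)
    have h2 := Real.log_le_rpow_div (x := 36 * ‖s‖) (by positivity) hη
    rw [Real.log_pow] at h1
    rw [Real.mul_rpow (by norm_num) (norm_nonneg s)] at h2
    push_cast at h1
    calc M ≤ 2 * (36 ^ η * ‖s‖ ^ η / η) := by linarith
      _ = _ := by ring
  have hmain := norm_logDeriv_le_of_ball (f := riemannZeta₁) (c := c) (R := 3 / 2)
    (r := 3 / 2 - δ) (M := M) (z := s) hMpos (by linarith) (by linarith)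
    differentiable_riemannZeta₁.differentiableOn
    (fun z hz ↦ riemannZeta₁_ne_zero hRH (hball z hz).1) (fun z hz ↦ ?_) ?_
  · refine hmain.trans ?_
    have : 3 / 2 - (3 / 2 - δ) = δ := by ring
    rw [this, show (3 / 2 + (3 / 2 - δ)) = 3 - δ by ring]
    have h3 : 0 ≤ 3 - δ := by linarith
    calc 4 * M * (3 - δ) / δ ^ 2 ≤ 4 * (2 * 36 ^ η / η * ‖s‖ ^ η) * (3 - δ) / δ ^ 2 := by gcongr
      _ = _ := by ring
  · obtain ⟨h1, h2⟩ := hball z hz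
    rw [hM, Real.exp_log (by linarith)]
    have h3 := norm_riemannZeta₁_le h1.le
    calc _ ≤ 3 * (‖z‖ + 1) ^ 2 := h3
      _ ≤ 3 * (‖s‖ + 4) ^ 2 := by
          have : ‖z‖ + 1 ≤ ‖s‖ + 4 := by linarith
          gcongr
      _ = 1 / 4 * (12 * (‖s‖ + 4) ^ 2) := by ring
      _ ≤ _ := by gcongr
  · have : s - c = ((s.re - 2 : ℝ) : ℂ) := by
      apply Complex.ext <;> simp [hc]
    rw [this, norm_real, Real.norm_eq_abs, abs_of_nonpos (by linarith)]
    linarith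

/-! ### The tent function and vertical contour shifts -/

lemma hasMellin_tent {a : ℝ} (ha : 0 < a) {s : ℂ} (hs : 0 < s.re) :
    HasMellin (fun y : ℝ ↦ ((max 0 (a - y) : ℝ) : ℂ)) s ((a : ℂ) ^ (s + 1) / (s * (s + 1))) := by
  have hs0 : s ≠ 0 := by rintro rfl; simp at hs
  have hs1 : s + 1 ≠ 0 := by
    intro h
    have := congrArg re h
    simp at this; linarith
  have hac : (a : ℂ) ≠ 0 := ofReal_ne_zero.2 ha.ne'
  have hi1 : IntervalIntegrable (fun y : ℝ ↦ (y : ℂ) ^ (s - 1)) volume 0 a :=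
    intervalIntegral.intervalIntegrable_cpow' (by simpa using hs)
  have hi2 : IntervalIntegrable (fun y : ℝ ↦ (y : ℂ) ^ s) volume 0 a :=
    intervalIntegral.intervalIntegrable_cpow' (by linarith)
  have hi := (hi1.const_mul (a : ℂ)).sub hi2
  have heq : (Ioi (0 : ℝ)).indicator (fun y : ℝ ↦ (y : ℂ) ^ (s - 1) • ((max 0 (a - y) : ℝ) : ℂ)) =
      (Ioc (0 : ℝ) a).indicator (fun y : ℝ ↦ (a : ℂ) * (y : ℂ) ^ (s - 1) - (y : ℂ) ^ s) := by
    funext y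
    by_cases hy : 0 < y
    · have hyc : (y : ℂ) ≠ 0 := ofReal_ne_zero.2 hy.ne'
      by_cases hya : y ≤ a
      · simp only [indicator, mem_Ioi, hy, if_true, mem_Ioc, hya, and_self, smul_eq_mul]
        rw [max_eq_right (by linarith), cpow_sub _ _ hyc, cpow_one]
        push_cast
        field_simp
      · simp only [indicator, mem_Ioi, hy, if_true, mem_Ioc, hya, and_false, if_false, smul_eq_mul]
        rw [max_eq_left (by linarith)]
        simp
    · simp [indicator, hy]
  constructor
  · rw [MellinConvergent, ← integrable_indicator_iff measurableSet_Ioi, heq,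
      integrable_indicator_iff measurableSet_Ioc]
    exact (intervalIntegrable_iff_integrableOn_Ioc_of_le ha.le).1 hi
  · rw [mellin, ← integral_indicator measurableSet_Ioi, heq, integral_indicator measurableSet_Ioc,
      ← intervalIntegral.integral_of_le ha.le, intervalIntegral.integral_sub (hi1.const_mul _) hi2,
      intervalIntegral.integral_const_mul, integral_cpow (Or.inl (by simpa using hs)),
      integral_cpow (Or.inl (by linarith))]
    simp only [ofReal_zero, sub_add_cancel]
    rw [zero_cpow hs0, zero_cpow hs1, cpow_add _ _ hac, cpow_one]
    field_simp
    ring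

lemma one_add_abs_le {σ : ℝ} (hσ : 1 / 2 ≤ σ) (t : ℝ) : (1 + |t|) / 4 ≤ ‖(σ + t * I : ℂ)‖ := by
  have h1 := (le_abs_self _).trans (abs_re_le_norm (σ + t * I : ℂ))
  have h2 := abs_im_le_norm (σ + t * I : ℂ)
  simp at h1 h2
  linarith

lemma norm_rpow_neg_le {σ p : ℝ} (hσ : 1 / 2 ≤ σ) (hp : 1 < p) (t : ℝ) :
    ‖(σ + t * I : ℂ)‖ ^ (-p) ≤ 4 ^ p * (1 + ‖t‖) ^ (-p) := by
  have h := one_add_abs_le hσ t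
  have h0 : 0 < (1 + |t|) / 4 := by positivity
  refine (Real.rpow_le_rpow_of_nonpos h0 h (by linarith)).trans_eq ?_
  rw [Real.div_rpow (by positivity) (by norm_num), Real.rpow_neg (by norm_num : (0 : ℝ) ≤ 4),
    Real.norm_eq_abs]
  field_simp

lemma integrable_one_add_rpow {p : ℝ} (hp : 1 < p) :
    Integrable (fun t : ℝ ↦ 4 ^ p * (1 + ‖t‖) ^ (-p)) :=
  (integrable_one_add_norm (by simpa using hp)).const_mul _

lemma integrable_vertical {f : ℂ → ℂ} {σ p C : ℝ} (hσ : 1 / 2 < σ) (hp : 1 < p)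
    (hf : DifferentiableOn ℂ f {s : ℂ | 1 / 2 < s.re})
    (hb : ∀ t : ℝ, ‖f (σ + t * I)‖ ≤ C * ‖(σ + t * I : ℂ)‖ ^ (-p)) :
    Integrable (fun t : ℝ ↦ f (σ + t * I)) := by
  have hC : 0 ≤ C := by
    have h := (norm_nonneg _).trans (hb 0)
    refine nonneg_of_mul_nonneg_left h ?_
    refine Real.rpow_pos_of_pos (lt_of_lt_of_le ?_ (one_add_abs_le hσ.le 0)) _
    norm_num
  refine Integrable.mono' ((integrable_one_add_rpow hp).const_mul C) ?_ (ae_of_all _ fun t ↦ ?_)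
  · refine Continuous.aestronglyMeasurable ?_
    refine hf.continuousOn.comp_continuous (by fun_prop) fun t ↦ ?_
    simpa using hσ
  · refine (hb t).trans ?_
    gcongr
    exact norm_rpow_neg_le hσ.le hp t

/-- The contour shift from `Re s = 2` to `Re s = σ` for a holomorphic integrand decaying like
`‖s‖ ^ (-p)`, `p > 1`. -/
lemma integral_vertical_eq {f : ℂ → ℂ} {σ p C : ℝ} (hσ : 1 / 2 < σ) (hσ2 : σ ≤ 2) (hp : 1 < p)
    (hf : DifferentiableOn ℂ f {s : ℂ | 1 / 2 < s.re})
    (hb : ∀ s : ℂ, σ ≤ s.re → s.re ≤ 2 → ‖f s‖ ≤ C * ‖s‖ ^ (-p)) :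
    ∫ t : ℝ, f (2 + t * I) = ∫ t : ℝ, f (σ + t * I) := by
  have hb' : ∀ x ∈ Icc σ 2, ∀ t : ℝ, ‖f (x + t * I)‖ ≤ C * ‖(x + t * I : ℂ)‖ ^ (-p) :=
    fun x hx t ↦ hb _ (by simpa using hx.1) (by simpa using hx.2)
  have hint1 := integrable_vertical hσ hp hf (hb' σ ⟨le_rfl, hσ2⟩)
  have hint2 := integrable_vertical (σ := 2) (by norm_num) hp hf (hb' 2 ⟨hσ2, le_rfl⟩)
  have hC : 0 ≤ C := by
    have h := (norm_nonneg _).trans (hb' σ ⟨le_rfl, hσ2⟩ 0)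
    refine nonneg_of_mul_nonneg_left h ?_
    refine Real.rpow_pos_of_pos (lt_of_lt_of_le ?_ (one_add_abs_le hσ.le 0)) _
    norm_num
  simp only [ofReal_ofNat] at hint2
  have hlim1 := intervalIntegral_tendsto_integral hint1 tendsto_neg_atTop_atBot tendsto_id
  have hlim2 := intervalIntegral_tendsto_integral hint2 tendsto_neg_atTop_atBot tendsto_id
  -- The horizontal sides of the rectangle contribute nothing in the limit.
  have hhor : ∀ u : ℝ → ℝ, (∀ T, |u T| = |T|) →
      Tendsto (fun T : ℝ ↦ ∫ x : ℝ in σ..2, f (x + u T * I)) atTop (nhds 0) := by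
    intro u hu
    have hz : Tendsto (fun T : ℝ ↦ C * T ^ (-p) * |2 - σ|) atTop (nhds 0) := by
      have := ((tendsto_rpow_neg_atTop (by linarith : 0 < p)).const_mul C).mul_const |2 - σ|
      simpa using this
    refine squeeze_zero_norm' ?_ hz
    filter_upwards [eventually_gt_atTop 0] with T hT
    refine intervalIntegral.norm_integral_le_of_norm_le_const fun x hx ↦ ?_
    rw [uIoc_of_le hσ2] at hx
    refine (hb' x ⟨hx.1.le, hx.2⟩ (u T)).trans ?_
    gcongr ?_ * ?_
    have h2 := abs_im_le_norm (x + u T * I : ℂ)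
    have h3 : (x + u T * I : ℂ).im = u T := by simp
    rw [h3, hu, abs_of_pos hT] at h2
    exact Real.rpow_le_rpow_of_nonpos hT h2 (by linarith)
  have hA := hhor (fun T ↦ -T) (fun T ↦ abs_neg T)
  have hB := hhor (fun T ↦ T) (fun T ↦ rfl)
  have hrect : ∀ T : ℝ, (∫ x : ℝ in σ..2, f (x + (-T : ℝ) * I)) - (∫ x : ℝ in σ..2, f (x + T * I)) +
      I * (∫ y : ℝ in -T..T, f (2 + y * I)) - I * (∫ y : ℝ in -T..T, f (σ + y * I)) = 0 := by
    intro T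
    have h := integral_boundary_rect_eq_zero_of_differentiableOn f (σ + (-T : ℝ) * I) (2 + T * I)
      (hf.mono fun z hz ↦ ?_)
    · simpa using h
    · rw [mem_reProdIm] at hz
      have h1 := hz.1
      simp [uIcc_of_le hσ2] at h1
      exact lt_of_lt_of_le hσ h1.1
  have hlim := ((hA.sub hB).add (hlim2.const_mul I)).sub (hlim1.const_mul I)
  have h0 := tendsto_nhds_unique (hlim.congr fun T ↦ hrect T) tendsto_const_nhds
  have h1 : I * ((∫ t : ℝ, f (2 + t * I)) - ∫ t : ℝ, f (σ + t * I)) = 0 := by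
    rw [← h0]; ring
  exact sub_eq_zero.1 ((mul_eq_zero.1 h1).resolve_left I_ne_zero)

/-! ### Perron's formula with tent weights -/

/-- The Mellin transform `a ^ (s + 1) / (s (s + 1))` of the tent `y ↦ max 0 (a - y)`. -/
noncomputable def tentMellin (a : ℝ) (s : ℂ) : ℂ := (a : ℂ) ^ (s + 1) / (s * (s + 1))

lemma differentiableOn_tentMellin {a : ℝ} (ha : 0 < a) :
    DifferentiableOn ℂ (tentMellin a) {s : ℂ | 1 / 2 < s.re} := by
  intro s hs
  have hs' : 1 / 2 < s.re := hs
  have hs0 : s ≠ 0 := by rintro rfl; simp at hs'; linarith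
  have hs1 : s + 1 ≠ 0 := by
    intro h
    have := congrArg re h
    simp at this; linarith
  have hac : (a : ℂ) ≠ 0 := ofReal_ne_zero.2 ha.ne'
  refine DifferentiableAt.differentiableWithinAt ?_
  unfold tentMellin
  refine DifferentiableAt.fun_div ?_ (by fun_prop) (mul_ne_zero hs0 hs1)
  exact DifferentiableAt.const_cpow (by fun_prop) (Or.inl hac)

lemma norm_le_norm_add_one {s : ℂ} (hs : 0 ≤ s.re) : ‖s‖ ≤ ‖s + 1‖ := by
  rw [← sq_le_sq₀ (norm_nonneg _) (norm_nonneg _), Complex.sq_norm, Complex.sq_norm, normSq_apply,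
    normSq_apply]
  simp
  nlinarith

lemma norm_tentMellin_le {a : ℝ} (ha : 0 < a) {s : ℂ} (hs : 1 / 2 < s.re) :
    ‖tentMellin a s‖ ≤ a ^ (s.re + 1) * ‖s‖ ^ (-2 : ℝ) := by
  have hs0 : 0 < ‖s‖ := norm_pos_iff.2 (by rintro rfl; simp at hs; linarith)
  have h := norm_le_norm_add_one (s := s) (by linarith)
  rw [tentMellin, norm_div, norm_mul, norm_cpow_eq_rpow_re_of_pos ha, Real.rpow_neg hs0.le,
    ← div_eq_mul_inv]
  simp only [add_re, one_re, Real.rpow_ofNat]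
  rw [sq]
  gcongr

/-- Mellin inversion for the tent on the line `Re s = 2`. -/
lemma tent_eq_integral {a : ℝ} (ha : 0 < a) {y : ℝ} (hy : 0 < y) :
    ((max 0 (a - y) : ℝ) : ℂ) = (1 / (2 * Real.pi) : ℝ) *
      ∫ t : ℝ, (y : ℂ) ^ (-(2 + t * I)) * tentMellin a (2 + t * I) := by
  have hline : ∀ t : ℝ, mellin (fun y : ℝ ↦ ((max 0 (a - y) : ℝ) : ℂ)) (2 + t * I) =
      tentMellin a (2 + t * I) := fun t ↦ (hasMellin_tent ha (by simp)).2
  have h := mellinInv_mellin_eq 2 (fun y : ℝ ↦ ((max 0 (a - y) : ℝ) : ℂ)) hy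
    (hasMellin_tent ha (by simp)).1 ?_ (by fun_prop)
  · rw [← h, mellinInv]
    simp only [ofReal_ofNat, hline, smul_eq_mul, real_smul]
  · simp only [VerticalIntegrable, ofReal_ofNat, hline]
    have := integrable_vertical (σ := 2) (C := a ^ (2 + 1 : ℝ)) (by norm_num) (by norm_num : (1 : ℝ) < 2)
      (differentiableOn_tentMellin ha) (fun t ↦ ?_)
    · simpa using this
    · have := norm_tentMellin_le ha (s := ((2 : ℝ) + t * I : ℂ)) (by simp; norm_num)
      simpa using this

lemma integrable_tentMellin_two {a : ℝ} (ha : 0 < a) :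
    Integrable (fun t : ℝ ↦ tentMellin a (2 + t * I)) := by
  have := integrable_vertical (σ := 2) (C := a ^ (2 + 1 : ℝ)) (by norm_num) (by norm_num : (1 : ℝ) < 2)
      (differentiableOn_tentMellin ha) (fun t ↦ ?_)
  · simpa using this
  · have := norm_tentMellin_le ha (s := ((2 : ℝ) + t * I : ℂ)) (by simp; norm_num)
    simpa using this

open ArithmeticFunction in
/-- Perron's formula with tent weight for the von Mangoldt function. -/
lemma sum_vonMangoldt_tent {a : ℝ} (ha : 0 < a) :
    Integrable (fun t : ℝ ↦ LSeries (fun n ↦ (vonMangoldt n : ℂ)) (2 + t * I) *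
        tentMellin a (2 + t * I)) ∧
    ∑' n : ℕ, (vonMangoldt n : ℂ) * ((max 0 (a - n) : ℝ) : ℂ) = (1 / (2 * Real.pi) : ℝ) *
      ∫ t : ℝ, LSeries (fun n ↦ (vonMangoldt n : ℂ)) (2 + t * I) * tentMellin a (2 + t * I) := by
  set F : ℕ → ℝ → ℂ := fun n t ↦ LSeries.term (fun n ↦ (vonMangoldt n : ℂ)) (2 + t * I) n *
    tentMellin a (2 + t * I) with hF
  have hnorm : ∀ n t, ‖F n t‖ = ‖LSeries.term (fun n ↦ (vonMangoldt n : ℂ)) 2 n‖ *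
      ‖tentMellin a (2 + t * I)‖ := by
    intro n t
    simp [hF, LSeries.norm_term_eq]
  have hcont : ∀ n, Continuous fun t : ℝ ↦
      LSeries.term (fun n ↦ (vonMangoldt n : ℂ)) (2 + t * I) n := by
    intro n
    rcases eq_or_ne n 0 with rfl | hn
    · simpa using continuous_const
    · have hn' : (n : ℂ) ≠ 0 := by exact_mod_cast hn
      simp only [LSeries.term_of_ne_zero hn]
      refine Continuous.div continuous_const ?_ fun t ↦ by simp [cpow_eq_zero_iff, hn']
      exact Continuous.const_cpow (by fun_prop) (Or.inl hn')
  have hint : ∀ n, Integrable (F n) := by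
    intro n
    refine Integrable.mono' ((integrable_tentMellin_two ha).norm.const_mul
      ‖LSeries.term (fun n ↦ (vonMangoldt n : ℂ)) 2 n‖) ?_ (ae_of_all _ fun t ↦ (hnorm n t).le)
    exact (hcont n).aestronglyMeasurable.mul (integrable_tentMellin_two ha).aestronglyMeasurable
  have hsum2 : Summable fun n ↦ ‖LSeries.term (fun n ↦ (vonMangoldt n : ℂ)) 2 n‖ :=
    (LSeriesSummable_vonMangoldt (s := 2) (by simp)).norm
  have hsum : Summable fun n ↦ ∫ t, ‖F n t‖ := by
    simp_rw [hnorm, integral_const_mul]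
    exact hsum2.mul_right _
  have hts : ∀ t : ℝ, ∑' n, F n t = LSeries (fun n ↦ (vonMangoldt n : ℂ)) (2 + t * I) *
      tentMellin a (2 + t * I) := by
    intro t
    simp only [hF, LSeries]
    rw [tsum_mul_right]
  constructor
  · simp_rw [← hts]
    have h1 : Integrable (fun t : ℝ ↦ (∑' n, ‖LSeries.term (fun n ↦ (vonMangoldt n : ℂ)) 2 n‖) *
      ‖tentMellin a (2 + t * I)‖) := (integrable_tentMellin_two ha).norm.const_mul _
    refine Integrable.mono' h1 ?_ (ae_of_all _ fun t ↦ ?_)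
    · have hm : ∀ n, AEStronglyMeasurable (F n) volume := fun n ↦ (hint n).aestronglyMeasurable
      refine aestronglyMeasurable_of_tendsto_ae (u := atTop)
        (f := fun (k : ℕ) t ↦ ∑ n ∈ Finset.range k, F n t) (fun k ↦ ?_) (ae_of_all _ fun t ↦ ?_)
      · exact Finset.aestronglyMeasurable_fun_sum _ fun n _ ↦ hm n
      · refine (Summable.of_norm ?_).hasSum.tendsto_sum_nat
        simp_rw [hnorm]
        exact hsum2.mul_right _
    · refine tsum_of_norm_bounded (hsum2.hasSum.mul_right _) fun n ↦ (hnorm n t).le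
  · simp_rw [← hts]
    rw [← integral_tsum_of_summable_integral_norm hint hsum, ← tsum_mul_left]
    refine tsum_congr fun n ↦ ?_
    rcases eq_or_ne n 0 with rfl | hn
    · simp [hF]
    · have hn0 : (0 : ℝ) < n := by exact_mod_cast Nat.pos_of_ne_zero hn
      rw [tent_eq_integral ha hn0]
      simp only [hF, LSeries.term_of_ne_zero hn]
      rw [mul_left_comm, ← integral_const_mul]
      congr 2
      funext t
      rw [cpow_neg]
      push_cast
      ring

/-- The continuous analogue of `sum_vonMangoldt_tent`: the weight `Λ(n)` is replaced by Lebesgue measure on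
`(1, ∞)`, whose Dirichlet integral is `1 / (s - 1)`. -/
lemma integral_tent {a : ℝ} (ha : 1 ≤ a) :
    Integrable (fun t : ℝ ↦ 1 / (1 + t * I) * tentMellin a (2 + t * I)) ∧
    (((a - 1) ^ 2 / 2 : ℝ) : ℂ) = (1 / (2 * Real.pi) : ℝ) *
      ∫ t : ℝ, 1 / (1 + t * I) * tentMellin a (2 + t * I) := by
  have ha0 : 0 < a := by linarith
  have hA := integrable_tentMellin_two ha0
  have hne : ∀ t : ℝ, (1 + t * I : ℂ) ≠ 0 := by
    intro t h
    have := congrArg re h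
    simp at this
  have hinner : ∀ t : ℝ, ∫ y in Ioi (1 : ℝ), (y : ℂ) ^ (-(2 + t * I)) = 1 / (1 + t * I) := by
    intro t
    rw [integral_Ioi_cpow_of_lt (by simp) one_pos]
    have := hne t
    have h2 : (-(2 + t * I) + 1 : ℂ) = -(1 + t * I) := by ring
    rw [h2]
    simp only [ofReal_one, one_cpow]
    rw [neg_div_neg_eq]
  constructor
  · refine Integrable.mono' hA.norm ?_ (ae_of_all _ fun t ↦ ?_)
    · refine Continuous.aestronglyMeasurable ?_ |>.mul hA.aestronglyMeasurable
      exact Continuous.div continuous_const (by fun_prop) hne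
    · rw [norm_mul, norm_div, norm_one]
      have : 1 ≤ ‖(1 + t * I : ℂ)‖ := by
        have := (le_abs_self _).trans (abs_re_le_norm (1 + t * I : ℂ))
        simpa using this
      have h1 : 1 / ‖(1 + t * I : ℂ)‖ ≤ 1 := by
        rw [div_le_one (by linarith)]; exact this
      exact mul_le_of_le_one_left (norm_nonneg _) h1
  · have h1 : ∫ y in Ioi (1 : ℝ), ((max 0 (a - y) : ℝ) : ℂ) = (((a - 1) ^ 2 / 2 : ℝ) : ℂ) := by
      rw [integral_complex_ofReal]
      congr 1
      have h2 : ∫ y in Ioi (1 : ℝ), max 0 (a - y) = ∫ y in (1 : ℝ)..a, (a - y) := by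
        rw [intervalIntegral.integral_of_le ha, ← integral_indicator measurableSet_Ioi,
          ← integral_indicator measurableSet_Ioc]
        congr 1
        funext y
        by_cases hy : 1 < y
        · by_cases hya : y ≤ a
          · simp only [indicator, mem_Ioi, hy, if_true, mem_Ioc, hya, and_self]
            rw [max_eq_right (by linarith)]
          · simp only [indicator, mem_Ioi, hy, if_true, mem_Ioc, hya, and_false, if_false]
            rw [max_eq_left (by linarith)]
        · simp [indicator, hy]
      rw [h2, intervalIntegral.integral_sub (by simp) (by simp)]
      simp
      ring
    rw [← h1]
    have h3 : ∫ y in Ioi (1 : ℝ), ((max 0 (a - y) : ℝ) : ℂ) = ∫ y in Ioi (1 : ℝ),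
        (1 / (2 * Real.pi) : ℝ) * ∫ t : ℝ, (y : ℂ) ^ (-(2 + t * I)) * tentMellin a (2 + t * I) :=
      setIntegral_congr_fun measurableSet_Ioi fun y hy ↦ tent_eq_integral ha0 (one_pos.trans hy)
    rw [h3, integral_const_mul]
    congr 1
    rw [integral_integral_swap]
    · refine integral_congr_ae (ae_of_all _ fun t ↦ ?_)
      simp only
      rw [integral_mul_const, hinner]
    · have hd : Integrable (fun z : ℝ × ℝ ↦ z.1 ^ (-2 : ℝ) * ‖tentMellin a (2 + z.2 * I)‖)
          ((volume.restrict (Ioi (1 : ℝ))).prod volume) :=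
        Integrable.mul_prod (integrableOn_Ioi_rpow_of_lt (by norm_num) one_pos) hA.norm
      refine Integrable.mono' hd ?_ ?_
      · refine AEStronglyMeasurable.mul ?_ hA.aestronglyMeasurable.comp_snd
        refine Measurable.aestronglyMeasurable ?_
        exact Measurable.pow (by fun_prop) (by fun_prop)
      · have hae : ∀ᵐ z : ℝ × ℝ ∂((volume.restrict (Ioi (1 : ℝ))).prod volume), 1 < z.1 :=
          Measure.quasiMeasurePreserving_fst.ae (ae_restrict_mem measurableSet_Ioi)
        filter_upwards [hae] with z hz
        simp only [Function.uncurry]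
        rw [norm_mul, norm_cpow_eq_rpow_re_of_pos (by linarith)]
        simp

/-! ### The prime number theorem with square-root error -/

open ArithmeticFunction in
/-- Every natural number `n ≤ N` has weight `1`, and every other one weight `0`, in the difference of the
tents ending at `N + 1` and at `N`. -/
lemma psi_eq_tsum_tent (N : ℕ) :
    ((Chebyshev.psi N : ℝ) : ℂ) =
      ∑' n : ℕ, (vonMangoldt n : ℂ) * ((max 0 (((N + 1 : ℕ) : ℝ) - n) : ℝ) : ℂ) -
      ∑' n : ℕ, (vonMangoldt n : ℂ) * ((max 0 ((N : ℝ) - n) : ℝ) : ℂ) := by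
  have hz : ∀ M : ℕ, M ≤ N + 1 → ∀ n ∉ Finset.Ioc 0 N,
      (vonMangoldt n : ℂ) * ((max 0 ((M : ℝ) - n) : ℝ) : ℂ) = 0 := by
    intro M hM n hn
    rcases Nat.eq_zero_or_pos n with rfl | h0
    · simp
    · have : N + 1 ≤ n := by
        by_contra h
        exact hn (Finset.mem_Ioc.2 ⟨h0, by omega⟩)
      have h2 : (M : ℝ) ≤ n := by exact_mod_cast hM.trans this
      rw [max_eq_left (by linarith)]
      simp
  rw [tsum_eq_sum (hz (N + 1) le_rfl), tsum_eq_sum (hz N (by omega)), ← Finset.sum_sub_distrib,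
    Chebyshev.psi, Nat.floor_natCast]
  push_cast
  refine Finset.sum_congr rfl fun n hn ↦ ?_
  have hn' : (n : ℝ) ≤ N := by exact_mod_cast (Finset.mem_Ioc.1 hn).2
  rw [← mul_sub, max_eq_right (by linarith), max_eq_right (by linarith)]
  push_cast
  ring

open ArithmeticFunction in
/-- Subtracting the pole of `-ζ' / ζ` at `1` leaves minus the logarithmic derivative of `(s - 1) ζ(s)`. -/
lemma LSeries_vonMangoldt_sub {s : ℂ} (hs : 1 < s.re) :
    LSeries (fun n ↦ (vonMangoldt n : ℂ)) s - 1 / (s - 1) =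
      -(deriv riemannZeta₁ s / riemannZeta₁ s) := by
  have hs1 : s ≠ 1 := by rintro rfl; simp at hs
  have hs1' : s - 1 ≠ 0 := sub_ne_zero.2 hs1
  have hz : riemannZeta s ≠ 0 := riemannZeta_ne_zero_of_one_le_re hs.le
  have h1 : riemannZeta s = (s - 1)⁻¹ * riemannZeta₁ s := riemannZeta_eq_inv_sub_mul hs1
  have hz1 : riemannZeta₁ s ≠ 0 := by
    intro h
    rw [h1, h, mul_zero] at hz
    exact hz rfl
  have h2 := LSeries_vonMangoldt_eq_deriv_riemannZeta_div hs
  rw [h2, deriv_riemannZeta_eq_neg_inv_sub_sq_mul_add hs1, h1]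
  field_simp
  ring

/-- The Mellin transform of `T_{N+1} - T_N`, where `T_a y = max 0 (a - y)`; this difference of tents
equals `1` on `[0, N]` and vanishes beyond `N + 1`. -/
noncomputable def stepMellin (N : ℕ) (s : ℂ) : ℂ :=
  tentMellin (N + 1 : ℕ) s - tentMellin N s

lemma differentiableOn_stepMellin {N : ℕ} (hN : 1 ≤ N) :
    DifferentiableOn ℂ (stepMellin N) {s : ℂ | 1 / 2 < s.re} :=
  (differentiableOn_tentMellin (by positivity)).sub
    (differentiableOn_tentMellin (by exact_mod_cast hN))

lemma norm_stepMellin_le_two {N : ℕ} (hN : 1 ≤ N) {s : ℂ} (hs : 1 / 2 < s.re) :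
    ‖stepMellin N s‖ ≤ 2 * (N + 1 : ℝ) ^ (s.re + 1) * ‖s‖ ^ (-2 : ℝ) := by
  have h1 := norm_tentMellin_le (a := (N + 1 : ℕ)) (by positivity) hs
  have h2 := norm_tentMellin_le (a := N) (by exact_mod_cast hN) hs
  have h3 : (N : ℝ) ^ (s.re + 1) ≤ (N + 1 : ℝ) ^ (s.re + 1) :=
    Real.rpow_le_rpow (by positivity) (by linarith) (by linarith)
  have h4 : (N : ℝ) ^ (s.re + 1) * ‖s‖ ^ (-2 : ℝ) ≤ (N + 1 : ℝ) ^ (s.re + 1) * ‖s‖ ^ (-2 : ℝ) := by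
    gcongr
  push_cast at h1
  have h5 := norm_sub_le (tentMellin (N + 1 : ℕ) s) (tentMellin N s)
  push_cast at h5
  rw [stepMellin]
  push_cast
  linarith

/-- Mean value inequality in the endpoint of the tent, where the derivative of `tentMellin y s` is
`y ^ s / s`. -/
lemma norm_stepMellin_le_one {N : ℕ} (hN : 1 ≤ N) {s : ℂ} (hs : 1 / 2 < s.re) :
    ‖stepMellin N s‖ ≤ (N + 1 : ℝ) ^ s.re * ‖s‖⁻¹ := by
  have hs0 : s ≠ 0 := by rintro rfl; simp at hs; linarith
  have hs1 : s + 1 ≠ 0 := by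
    intro h
    have := congrArg re h
    simp at this; linarith
  have hN0 : (0 : ℝ) < N := by exact_mod_cast hN
  have hd : ∀ y ∈ Icc (N : ℝ) (N + 1), HasDerivWithinAt (fun y : ℝ ↦ tentMellin y s)
      ((y : ℂ) ^ s / s) (Icc (N : ℝ) (N + 1)) y := by
    intro y hy
    have hy0 : 0 < y := hN0.trans_le hy.1
    have h := (hasDerivAt_ofReal_cpow_const' hy0.ne' (r := s)
      (by intro h; rw [h] at hs; simp at hs; linarith)).div_const s
    refine (h.congr_of_eventuallyEq ?_).hasDerivWithinAt
    refine Eventually.of_forall fun y ↦ ?_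
    simp only [tentMellin]
    field_simp
  have h := (convex_Icc (N : ℝ) (N + 1)).norm_image_sub_le_of_norm_hasDerivWithin_le hd
    (C := (N + 1 : ℝ) ^ s.re * ‖s‖⁻¹) ?_ (x := (N : ℝ)) (y := (N : ℝ) + 1) (by simp) (by simp)
  · rw [stepMellin]
    simpa using h
  · intro y hy
    have hy0 : 0 < y := hN0.trans_le hy.1
    rw [norm_div, norm_cpow_eq_rpow_re_of_pos hy0, div_eq_mul_inv]
    gcongr
    exact hy.2

/-- Geometric interpolation between `norm_stepMellin_le_one` and `norm_stepMellin_le_two`: just enough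
decay in `‖s‖` for integrability, at the cost of a factor `(N + 1) ^ h`. -/
lemma norm_stepMellin_le {N : ℕ} (hN : 1 ≤ N) {h : ℝ} (h0 : 0 ≤ h) (h1 : h ≤ 1) {s : ℂ}
    (hs : 1 / 2 < s.re) :
    ‖stepMellin N s‖ ≤ 2 * (N + 1 : ℝ) ^ (s.re + h) * ‖s‖ ^ (-(1 + h)) := by
  have hs0 : 0 < ‖s‖ := norm_pos_iff.2 (by rintro rfl; simp at hs; linarith)
  have hN1 : (0 : ℝ) < N + 1 := by positivity
  have e : ‖stepMellin N s‖ = ‖stepMellin N s‖ ^ (1 - h) * ‖stepMellin N s‖ ^ h := by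
    rw [← Real.rpow_add' (norm_nonneg _) (by norm_num)]
    simp
  rw [e]
  calc ‖stepMellin N s‖ ^ (1 - h) * ‖stepMellin N s‖ ^ h
      ≤ ((N + 1 : ℝ) ^ s.re * ‖s‖ ^ (-1 : ℝ)) ^ (1 - h) *
        (2 * (N + 1 : ℝ) ^ (s.re + 1) * ‖s‖ ^ (-2 : ℝ)) ^ h := by
        gcongr
        · rw [Real.rpow_neg_one]; exact norm_stepMellin_le_one hN hs
        · exact norm_stepMellin_le_two hN hs
    _ = 2 ^ h * (N + 1 : ℝ) ^ (s.re + h) * ‖s‖ ^ (-(1 + h)) := by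
        rw [Real.mul_rpow (by positivity) (by positivity),
          Real.mul_rpow (by positivity) (by positivity),
          Real.mul_rpow (by positivity) (by positivity),
          ← Real.rpow_mul hN1.le, ← Real.rpow_mul hN1.le, ← Real.rpow_mul hs0.le,
          ← Real.rpow_mul hs0.le]
        have e1 : (N + 1 : ℝ) ^ (s.re + h) =
            (N + 1 : ℝ) ^ (s.re * (1 - h)) * (N + 1 : ℝ) ^ ((s.re + 1) * h) := by
          rw [← Real.rpow_add hN1]; ring_nf
        have e2 : ‖s‖ ^ (-(1 + h)) = ‖s‖ ^ (-1 * (1 - h)) * ‖s‖ ^ (-2 * h) := by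
          rw [← Real.rpow_add hs0]; ring_nf
        rw [e1, e2]
        ring
    _ ≤ 2 * (N + 1 : ℝ) ^ (s.re + h) * ‖s‖ ^ (-(1 + h)) := by
        gcongr
        calc (2 : ℝ) ^ h ≤ 2 ^ (1 : ℝ) := Real.rpow_le_rpow_of_exponent_le (by norm_num) h1
          _ = 2 := by norm_num

open ArithmeticFunction in
lemma psi_sub_eq_integral {N : ℕ} (hN : 1 ≤ N) :
    ((Chebyshev.psi N - (N - 1 / 2) : ℝ) : ℂ) = (1 / (2 * Real.pi) : ℝ) *
      ∫ t : ℝ, -(deriv riemannZeta₁ (2 + t * I) / riemannZeta₁ (2 + t * I)) *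
        stepMellin N (2 + t * I) := by
  have hN1 : (1 : ℝ) ≤ N := by exact_mod_cast hN
  have hN2 : (1 : ℝ) ≤ (N + 1 : ℕ) := by push_cast; linarith
  obtain ⟨i1, e1⟩ := sum_vonMangoldt_tent (a := (N + 1 : ℕ)) (by linarith)
  obtain ⟨i2, e2⟩ := sum_vonMangoldt_tent (a := N) (by linarith)
  obtain ⟨i3, e3⟩ := integral_tent hN2
  obtain ⟨i4, e4⟩ := integral_tent hN1
  have hm : ((N - 1 / 2 : ℝ) : ℂ) = ((((N + 1 : ℕ) - 1 : ℝ) ^ 2 / 2 : ℝ) : ℂ) -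
      (((N - 1 : ℝ) ^ 2 / 2 : ℝ) : ℂ) := by
    push_cast
    ring
  rw [ofReal_sub, psi_eq_tsum_tent, hm, e1, e2, e3, e4, ← mul_sub, ← mul_sub, ← mul_sub,
    ← integral_sub i1 i2, ← integral_sub i3 i4]
  have hi := integral_sub (i1.sub i2) (i3.sub i4)
  simp only [Pi.sub_apply] at hi
  rw [← hi]
  congr 2
  funext t
  rw [← LSeries_vonMangoldt_sub (by simp), stepMellin]
  have : (2 + t * I - 1 : ℂ) = 1 + t * I := by ring
  rw [this]
  ring

/-- Under the Riemann Hypothesis, `ψ(N) = N + O(N ^ α)` for every `α > 1 / 2`. -/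
lemma abs_psi_sub_le (hRH : RiemannHypothesis) {α : ℝ} (hα : 1 / 2 < α) (hα1 : α ≤ 1) :
    ∃ C, 0 ≤ C ∧ ∀ N : ℕ, 1 ≤ N → |Chebyshev.psi N - N| ≤ C * (N : ℝ) ^ α := by
  -- On the line `σ = 1 / 2 + δ` the kernel is `O(N ^ (σ + δ) ‖s‖ ^ (-1 - δ))` and the logarithmic
  -- derivative `O(‖s‖ ^ (δ / 2))`; the choice of `δ` makes `σ + δ = α`.
  set δ : ℝ := (α - 1 / 2) / 2 with hδ
  have hδ0 : 0 < δ := by rw [hδ]; linarith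
  have hδ1 : δ ≤ 1 / 4 := by rw [hδ]; linarith
  obtain ⟨C, hC, hF⟩ := norm_logDeriv_riemannZeta₁_le hRH hδ0 (by linarith) (half_pos hδ0)
  set σ : ℝ := 1 / 2 + δ with hσ
  have hσ0 : 1 / 2 < σ := by linarith
  have hσ2 : σ ≤ 2 := by linarith
  have hp : 1 < 1 + δ / 2 := by linarith
  have hFd : DifferentiableOn ℂ (fun s ↦ -(deriv riemannZeta₁ s / riemannZeta₁ s))
      {s : ℂ | 1 / 2 < s.re} := by
    intro s hs
    have := riemannZeta₁_ne_zero hRH hs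
    have h1 : Differentiable ℂ riemannZeta₁ := differentiable_riemannZeta₁
    exact (((h1.deriv s).div (h1 s) this).neg).differentiableWithinAt
  set J : ℝ := ∫ t : ℝ, 4 ^ (1 + δ / 2) * (1 + ‖t‖) ^ (-(1 + δ / 2)) with hJ
  have hJi : Integrable fun t : ℝ ↦ (4 : ℝ) ^ (1 + δ / 2) * (1 + ‖t‖) ^ (-(1 + δ / 2)) :=
    integrable_one_add_rpow hp
  have hJ0 : 0 ≤ J := integral_nonneg fun t ↦ by positivity
  refine ⟨1 / (2 * Real.pi) * (C * 4 * J) + 1 / 2, by positivity, fun N hN ↦ ?_⟩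
  have hN1 : (1 : ℝ) ≤ N := by exact_mod_cast hN
  have hfd : DifferentiableOn ℂ (fun s ↦ -(deriv riemannZeta₁ s / riemannZeta₁ s) * stepMellin N s)
      {s : ℂ | 1 / 2 < s.re} := hFd.mul (differentiableOn_stepMellin hN)
  have hstrip : ∀ s : ℂ, σ ≤ s.re → s.re ≤ 2 →
      ‖-(deriv riemannZeta₁ s / riemannZeta₁ s) * stepMellin N s‖ ≤
        C * (2 * (N + 1 : ℝ) ^ (s.re + δ)) * ‖s‖ ^ (-(1 + δ / 2)) := by
    intro s h1 h2
    have hs0 : 0 < ‖s‖ := norm_pos_iff.2 (by rintro rfl; simp at h1; linarith)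
    have e : ‖s‖ ^ (-(1 + δ / 2)) = ‖s‖ ^ (δ / 2) * ‖s‖ ^ (-(1 + δ)) := by
      rw [← Real.rpow_add hs0]; ring_nf
    rw [norm_mul, norm_neg, e]
    calc _ ≤ (C * ‖s‖ ^ (δ / 2)) * (2 * (N + 1 : ℝ) ^ (s.re + δ) * ‖s‖ ^ (-(1 + δ))) := by
          gcongr
          · exact hF s h1 h2
          · exact norm_stepMellin_le hN hδ0.le (by linarith) (hσ0.trans_le h1)
      _ = _ := by ring
  have hshift := integral_vertical_eq (C := C * (2 * (N + 1 : ℝ) ^ (2 + δ))) hσ0 hσ2 hp hfd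
    (fun s h1 h2 ↦ (hstrip s h1 h2).trans (by
      gcongr
      linarith))
  have hmain := psi_sub_eq_integral hN
  rw [hshift] at hmain
  have hb : ‖∫ t : ℝ, -(deriv riemannZeta₁ (σ + t * I) / riemannZeta₁ (σ + t * I)) *
      stepMellin N (σ + t * I)‖ ≤ C * (2 * (N + 1 : ℝ) ^ α) * J := by
    rw [hJ, ← integral_const_mul]
    refine norm_integral_le_of_norm_le (hJi.const_mul _) (ae_of_all _ fun t ↦ ?_)
    have h1 := hstrip (σ + t * I) (by simp) (by simpa using hσ2)
    refine h1.trans ?_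
    have e : ((σ : ℂ) + t * I).re + δ = α := by simp [hσ, hδ]; ring
    rw [e]
    gcongr
    exact norm_rpow_neg_le hσ0.le hp t
  have h3 : |Chebyshev.psi N - (N - 1 / 2)| ≤ 1 / (2 * Real.pi) * (C * (2 * (N + 1 : ℝ) ^ α) * J) := by
    rw [← Real.norm_eq_abs, ← norm_real, hmain, norm_mul, norm_real, Real.norm_of_nonneg (by positivity)]
    gcongr
  have h4 : (N + 1 : ℝ) ^ α ≤ 2 * (N : ℝ) ^ α := by
    calc (N + 1 : ℝ) ^ α ≤ (2 * N : ℝ) ^ α := by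
          apply Real.rpow_le_rpow <;> linarith
      _ = 2 ^ α * (N : ℝ) ^ α := Real.mul_rpow (by norm_num) (by linarith)
      _ ≤ 2 ^ (1 : ℝ) * (N : ℝ) ^ α := by gcongr; norm_num
      _ = 2 * (N : ℝ) ^ α := by norm_num
  have h5 : (1 : ℝ) ≤ (N : ℝ) ^ α := Real.one_le_rpow hN1 (by linarith)
  have h6 : |Chebyshev.psi N - N| ≤ |Chebyshev.psi N - (N - 1 / 2)| + 1 / 2 := by
    have := abs_sub (Chebyshev.psi N - (N - 1 / 2)) (1 / 2)
    rw [show Chebyshev.psi N - (N - 1 / 2) - 1 / 2 = Chebyshev.psi N - (N : ℝ) by ring] at this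
    simpa using this
  have h7 : 1 / (2 * Real.pi) * (C * (2 * (N + 1 : ℝ) ^ α) * J) ≤
      1 / (2 * Real.pi) * (C * (2 * (2 * (N : ℝ) ^ α)) * J) := by gcongr
  calc _ ≤ 1 / (2 * Real.pi) * (C * (2 * (2 * (N : ℝ) ^ α)) * J) + 1 / 2 * (N : ℝ) ^ α := by linarith
    _ = _ := by ring

/-- The bound of `abs_psi_sub_le` for `θ`, since prime powers contribute only `O(√N)` to `ψ(N)`. -/
lemma abs_theta_sub_le (hRH : RiemannHypothesis) {α : ℝ} (hα : 1 / 2 < α) (hα1 : α ≤ 1) :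
    ∃ C, 0 ≤ C ∧ ∀ N : ℕ, 1 ≤ N → |Chebyshev.theta N - N| ≤ C * (N : ℝ) ^ α := by
  obtain ⟨C, hC, h⟩ := abs_psi_sub_le hRH hα hα1
  obtain ⟨D, hD⟩ := Chebyshev.psi_sub_theta_le_mul_sqrt
  refine ⟨C + |D|, by positivity, fun N hN ↦ ?_⟩
  have hN1 : (1 : ℝ) ≤ N := by exact_mod_cast hN
  have h1 := h N hN
  have h2 := hD N
  have h3 : (0 : ℝ) ≤ Chebyshev.psi N - Chebyshev.theta N := sub_nonneg.2 (Chebyshev.theta_le_psi _)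
  have h4 : √(N : ℝ) ≤ (N : ℝ) ^ α := by
    rw [Real.sqrt_eq_rpow]
    exact Real.rpow_le_rpow_of_exponent_le hN1 hα.le
  have h5 : D * √(N : ℝ) ≤ |D| * (N : ℝ) ^ α := by
    gcongr
    exact le_abs_self D
  rw [add_mul]
  rw [abs_le] at h1 ⊢
  constructor <;> linarith [h1.1, h1.2]

/-! ### Greedy choice of signs -/

/-- The error `S(n) - Q(n)` of the greedy choice of signs: the sign of `ℓ (n + 1)` is chosen
opposite to that of the current error. -/
noncomputable def greedyError (ℓ Q : ℕ → ℝ) : ℕ → ℝ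
  | 0 => -Q 0
  | n + 1 => greedyError ℓ Q n + (if 0 < greedyError ℓ Q n then -1 else 1) * ℓ (n + 1) -
      (Q (n + 1) - Q n)

/-- The signs of the greedy choice; the value at `0` is immaterial. -/
noncomputable def greedySign (ℓ Q : ℕ → ℝ) : ℕ → ℝ
  | 0 => 1
  | n + 1 => if 0 < greedyError ℓ Q n then -1 else 1

lemma greedySign_eq (ℓ Q : ℕ → ℝ) (n : ℕ) : greedySign ℓ Q n = 1 ∨ greedySign ℓ Q n = -1 := by
  cases n with
  | zero => exact Or.inl rfl
  | succ n =>
    rw [greedySign]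
    split_ifs <;> simp

lemma greedyError_eq (ℓ Q : ℕ → ℝ) (n : ℕ) :
    greedyError ℓ Q n = ∑ k ∈ Finset.Icc 1 n, greedySign ℓ Q k * ℓ k - Q n := by
  induction n with
  | zero => simp [greedyError]
  | succ n ih =>
    rw [Finset.sum_Icc_succ_top (by omega), greedySign, greedyError, ih]
    ring

/-- If the weights `ℓ` have partial sums `n + O(B n)` and the target `Q` eventually has increments
of size at most `1`, the greedy error is `O(B n + log n)`. With `a n` the error and
`b n = ∑ k ≤ n, ℓ k - n`, neither `a n + b n` nor `-a n + b n` can increase at a step where the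
sign keeps pushing `a` towards `0`, so both are controlled by their values just after the last
change of sign of `a`. -/
lemma abs_greedyError_le {ℓ Q B : ℕ → ℝ} (hB : ∀ n, 1 ≤ n → B n ≤ B (n + 1))
    (hℓlog : ∀ n, ℓ n ≤ Real.log n)
    (hb : ∀ n, 1 ≤ n → |∑ k ∈ Finset.Icc 1 n, ℓ k - n| ≤ B n)
    (hr : ∀ᶠ n in atTop, |Q (n + 1) - Q n| ≤ 1) :
    ∃ K, 0 ≤ K ∧ ∀ n : ℕ, 1 ≤ n → |greedyError ℓ Q n| ≤ K + Real.log n + 1 + 2 * B n := by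
  obtain ⟨n₀, hn₀⟩ := eventually_atTop.1 hr
  set a := greedyError ℓ Q with ha
  set b : ℕ → ℝ := fun n ↦ ∑ k ∈ Finset.Icc 1 n, ℓ k - n with hbdef
  set K : ℝ := ∑ k ∈ Finset.range (n₀ + 2), |a k| with hK
  have hKa : ∀ n, n < n₀ + 2 → |a n| ≤ K := fun n hn ↦
    Finset.single_le_sum (f := fun k ↦ |a k|) (fun _ _ ↦ abs_nonneg _) (Finset.mem_range.2 hn)
  have hK0 : 0 ≤ K := Finset.sum_nonneg fun _ _ ↦ abs_nonneg _
  have hlog0 : ∀ n : ℕ, 0 ≤ Real.log n := fun n ↦ Real.log_natCast_nonneg n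
  have hlog : ∀ n : ℕ, 1 ≤ n → Real.log n ≤ Real.log ((n + 1 : ℕ) : ℝ) := fun n hn ↦
    Real.log_le_log (by exact_mod_cast hn) (by push_cast; linarith)
  have hb' : ∀ n, 1 ≤ n → b n ≤ B n := fun n hn ↦ (le_abs_self _).trans (hb n hn)
  have hbs : ∀ n, b (n + 1) = b n + ℓ (n + 1) - 1 := by
    intro n
    simp only [hbdef]
    rw [Finset.sum_Icc_succ_top (by omega)]
    push_cast
    ring
  have key : ∀ n, n₀ + 1 ≤ n → a n + b n ≤ K + Real.log n + 1 + B n ∧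
      -a n + b n ≤ K + Real.log n + 1 + B n := by
    intro n hn
    induction n, hn using Nat.le_induction with
    | base =>
      have h1 := abs_le.1 (hKa (n₀ + 1) (by omega))
      have h2 := hb' (n₀ + 1) (by omega)
      have h3 := hlog0 (n₀ + 1)
      constructor <;> linarith [h1.1, h1.2]
    | succ n hn ih =>
      have h1 := hlog n (by omega)
      have h2 := hlog0 (n + 1)
      have h3 := hb' (n + 1) (by omega)
      have h4 := hB n (by omega)
      have h5 := hℓlog (n + 1)
      have h6 := abs_le.1 (hn₀ n (by omega))
      have h7 := hbs n
      have h8 : a (n + 1) = a n + (if 0 < a n then -1 else 1) * ℓ (n + 1) - (Q (n + 1) - Q n) := rfl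
      split_ifs at h8 with h
      · constructor <;> linarith [h6.1, h6.2, ih.1, ih.2]
      · constructor <;> linarith [h6.1, h6.2, ih.1, ih.2]
  refine ⟨K, hK0, fun n hn ↦ ?_⟩
  have h1 := hb n hn
  have h2 : 0 ≤ B n := (abs_nonneg _).trans h1
  have h3 := hlog0 n
  rcases lt_or_ge n (n₀ + 1) with h | h
  · linarith [hKa n (by omega)]
  · have h4 := key n h
    have h5 : |b n| ≤ B n := h1
    rw [abs_le] at h5 ⊢
    constructor <;> linarith [h4.1, h4.2, h5.1, h5.2]

/-- The prime weights `log p`, extended by `0` to all natural numbers. -/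
noncomputable def primeLog (n : ℕ) : ℝ := if n.Prime then Real.log n else 0

lemma primeLog_nonneg (n : ℕ) : 0 ≤ primeLog n := by
  rw [primeLog]
  split_ifs
  · exact Real.log_natCast_nonneg n
  · exact le_rfl

lemma sum_primeLog (n : ℕ) : ∑ k ∈ Finset.Icc 1 n, primeLog k = Chebyshev.theta n := by
  rw [Chebyshev.theta, Nat.floor_natCast, Finset.sum_filter]
  rfl

/-- Under the Riemann Hypothesis, greedily signed sums of `log p` follow the target `Q` up to
`O(n ^ α)` for every `α > 1 / 2`; the signs do not depend on `α`. -/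
lemma abs_greedyError_primeLog_le (hRH : RiemannHypothesis) {Q : ℕ → ℝ}
    (hr : ∀ᶠ n in atTop, |Q (n + 1) - Q n| ≤ 1) {α : ℝ} (hα : 1 / 2 < α) (hα1 : α ≤ 1) :
    ∃ C, 0 ≤ C ∧ ∀ n : ℕ, 1 ≤ n → |greedyError primeLog Q n| ≤ C * (n : ℝ) ^ α := by
  obtain ⟨C, hC, hθ⟩ := abs_theta_sub_le hRH hα hα1
  have hα0 : 0 < α := by linarith
  obtain ⟨K, hK, h⟩ := abs_greedyError_le (ℓ := primeLog) (Q := Q) (B := fun n ↦ C * (n : ℝ) ^ α)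
    (fun n _ ↦ by
      gcongr
      linarith)
    (fun n ↦ by
      rw [primeLog]
      split_ifs
      · exact le_rfl
      · exact Real.log_natCast_nonneg n)
    (fun n hn ↦ by rw [sum_primeLog]; exact hθ n hn) hr
  refine ⟨K + α⁻¹ + 1 + 2 * C, by positivity, fun n hn ↦ (h n hn).trans ?_⟩
  have h1 : (1 : ℝ) ≤ (n : ℝ) ^ α := Real.one_le_rpow (by exact_mod_cast hn) hα0.le
  have h2 := Real.log_le_rpow_div (x := n) (by positivity) hα0
  have h3 : K * 1 ≤ K * (n : ℝ) ^ α := by gcongr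
  rw [div_eq_inv_mul] at h2
  linarith

/-! ### The completely multiplicative function and the continuation -/

/-- The completely multiplicative function with prescribed values `ε p` at the primes. -/
noncomputable def mulExt (ε : ℕ → ℝ) (n : ℕ) : ℂ :=
  if n = 0 then 0 else ((n.primeFactorsList.map ε).prod : ℝ)

lemma completelyMultiplicative_mulExt (ε : ℕ → ℝ) : CompletelyMultiplicative (mulExt ε) := by
  refine ⟨by simp [mulExt], fun m n ↦ ?_⟩
  rcases eq_or_ne m 0 with rfl | hm
  · simp [mulExt]
  rcases eq_or_ne n 0 with rfl | hn
  · simp [mulExt]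
  simp only [mulExt, hm, hn, mul_eq_zero, or_self, if_false]
  rw [((Nat.perm_primeFactorsList_mul hm hn).map ε).prod_eq, List.map_append, List.prod_append]
  push_cast
  rfl

lemma mulExt_mem {ε : ℕ → ℝ} (hε : ∀ n, ε n = 1 ∨ ε n = -1) {n : ℕ} (hn : 1 ≤ n) :
    mulExt ε n ∈ ({1, -1} : Set ℂ) := by
  have h : ∀ l : List ℕ, (l.map ε).prod = 1 ∨ (l.map ε).prod = -1 := by
    intro l
    induction l with
    | nil => simp
    | cons k l ih => rcases hε k with h | h <;> rcases ih with h' | h' <;> simp [h, h']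
  have hn0 : n ≠ 0 := by omega
  simp only [mulExt, hn0, if_false]
  rcases h n.primeFactorsList with h | h <;> simp [h]

lemma mulExt_prime (ε : ℕ → ℝ) {p : ℕ} (hp : p.Prime) : mulExt ε p = ε p := by
  simp [mulExt, hp.ne_zero, Nat.primeFactorsList_prime hp]

/-- Abel summation for the prime sum. -/
lemma tsum_primes_eq {ε : ℕ → ℝ} (hε : ∀ n, ε n = 1 ∨ ε n = -1) {s : ℂ} (hs : 1 < s.re) :
    ∑' p : Nat.Primes, mulExt ε p * (p : ℂ) ^ (-s) * (Real.log p : ℂ) =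
      s * ∫ t in Ioi (1 : ℝ), ((∑ k ∈ Finset.Icc 1 ⌊t⌋₊, ε k * primeLog k : ℝ) : ℂ) *
        (t : ℂ) ^ (-(s + 1)) := by
  have hn : ∀ k, ‖((ε k * primeLog k : ℝ) : ℂ)‖ = primeLog k := by
    intro k
    rw [norm_real, norm_mul, Real.norm_of_nonneg (primeLog_nonneg k)]
    rcases hε k with h | h <;> simp [h]
  have h := LSeries_eq_mul_integral' (fun k ↦ ((ε k * primeLog k : ℝ) : ℂ)) zero_le_one hs ?_
  · simp only [← ofReal_sum] at h
    rw [← h, LSeries]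
    have h2 := tsum_subtype {p : ℕ | p.Prime}
      (fun p ↦ mulExt ε p * (p : ℂ) ^ (-s) * (Real.log p : ℂ))
    refine h2.trans (tsum_congr fun n ↦ ?_)
    by_cases hp : n.Prime
    · rw [indicator_of_mem (by exact hp), LSeries.term_of_ne_zero hp.ne_zero, mulExt_prime ε hp,
        primeLog, if_pos hp, cpow_neg]
      push_cast
      ring
    · rw [indicator_of_notMem (by exact hp)]
      rcases eq_or_ne n 0 with rfl | h0
      · simp
      · rw [LSeries.term_of_ne_zero h0, primeLog, if_neg hp]
        simp
  · simp_rw [hn, sum_primeLog, Real.rpow_one]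
    refine Asymptotics.IsBigO.of_bound (Real.log 4) (Eventually.of_forall fun n ↦ ?_)
    rw [Real.norm_of_nonneg (Chebyshev.theta_nonneg _), Real.norm_of_nonneg (by positivity)]
    exact Chebyshev.theta_le_log4_mul_x (by positivity)

lemma abs_primitive_le {q : ℝ → ℝ} {D : ℝ} (hD : ∀ x, |q x| ≤ D) (a b : ℝ) :
    |∫ x in a..b, q x| ≤ D * |b - a| :=
  intervalIntegral.norm_integral_le_of_norm_le_const (f := q) fun x _ ↦ hD x

/-- Integration by parts for the Mellin integral. -/
lemma integral_eq_mul_primitive {q : ℝ → ℝ} (hq : Continuous q) {D : ℝ} (hD : ∀ x, |q x| ≤ D)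
    {s : ℂ} (hs : 1 < s.re) :
    ∫ x in Ioi (1 : ℝ), (q x : ℂ) * (x : ℂ) ^ (-s) =
      s * ∫ x in Ioi (1 : ℝ), ((∫ y in (1 : ℝ)..x, q y : ℝ) : ℂ) * (x : ℂ) ^ (-(s + 1)) := by
  set Q : ℝ → ℝ := fun x ↦ ∫ y in (1 : ℝ)..x, q y with hQ
  have hD0 : 0 ≤ D := (abs_nonneg _).trans (hD 0)
  have hQd : ∀ x, HasDerivAt Q (q x) x := fun x ↦
    intervalIntegral.integral_hasDerivAt_right (hq.intervalIntegrable _ _)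
      (hq.stronglyMeasurableAtFilter _ _) hq.continuousAt
  have hQc : Continuous Q := continuous_iff_continuousAt.2 fun x ↦ (hQd x).continuousAt
  have hQb : ∀ x, 1 < x → |Q x| ≤ D * x := by
    intro x hx
    refine (abs_primitive_le hD 1 x).trans ?_
    gcongr
    rw [abs_of_pos (by linarith)]
    linarith
  have hs0 : s ≠ 0 := by rintro rfl; simp at hs; linarith
  have hQi : IntegrableOn (fun x : ℝ ↦ (Q x : ℂ) * (x : ℂ) ^ (-(s + 1))) (Ioi 1) :=
    integrableOn_mul_cpow (f := fun x ↦ (Q x : ℂ)) (by fun_prop) (α := 1) (C := D)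
      (fun t ht ↦ by simpa using hQb t ht) hs
  have hqi : IntegrableOn (fun x : ℝ ↦ (q x : ℂ) * (x : ℂ) ^ (-s)) (Ioi 1) := by
    have := integrableOn_mul_cpow (f := fun x ↦ (q x : ℂ)) (by fun_prop) (α := 0) (C := D)
      (fun t _ ↦ by simpa using hD t) (s := s - 1) (by simpa using hs)
    simpa using this
  have hQm : Continuous fun x ↦ (Q x : ℂ) := by fun_prop
  have hlim0 : Tendsto ((fun x : ℝ ↦ (Q x : ℂ)) * fun x : ℝ ↦ (x : ℂ) ^ (-s)) (nhdsWithin 1 (Ioi 1))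
      (nhds 0) := by
    have hc : ContinuousAt ((fun x : ℝ ↦ (Q x : ℂ)) * fun x : ℝ ↦ (x : ℂ) ^ (-s)) 1 :=
      hQm.continuousAt.mul (continuousAt_ofReal_cpow_const 1 (-s) (Or.inr one_ne_zero))
    have h1 := hc.tendsto.mono_left (nhdsWithin_le_nhds (s := Ioi (1 : ℝ)))
    simpa [hQ] using h1
  have hlim1 : Tendsto ((fun x : ℝ ↦ (Q x : ℂ)) * fun x : ℝ ↦ (x : ℂ) ^ (-s)) atTop (nhds 0) := by
    have h1 : Tendsto (fun x : ℝ ↦ D * x ^ (-(s.re - 1))) atTop (nhds (D * 0)) :=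
      (tendsto_rpow_neg_atTop (by linarith)).const_mul D
    rw [mul_zero] at h1
    refine squeeze_zero_norm' ?_ h1
    filter_upwards [eventually_gt_atTop 1] with x hx
    have hx0 : 0 < x := by linarith
    rw [Pi.mul_apply, norm_mul, norm_real, norm_cpow_eq_rpow_re_of_pos hx0, Real.norm_eq_abs]
    have e : x ^ (-(s.re - 1)) = x * x ^ (-s).re := by
      nth_rewrite 2 [← Real.rpow_one x]
      rw [← Real.rpow_add hx0]
      simp
      ring_nf
    rw [e, ← mul_assoc]
    gcongr
    exact hQb x hx
  have h := integral_Ioi_mul_deriv_eq_deriv_mul (a := (1 : ℝ)) (u := fun x ↦ (Q x : ℂ))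
    (u' := fun x ↦ (q x : ℂ)) (v := fun x : ℝ ↦ (x : ℂ) ^ (-s))
    (v' := fun x : ℝ ↦ -s * (x : ℂ) ^ (-(s + 1))) (a' := 0) (b' := 0)
    (fun x _ ↦ (hQd x).ofReal_comp) (fun x hx ↦ ?_) ?_ hqi hlim0 hlim1
  · have h2 : ∀ x : ℝ, (Q x : ℂ) * (-s * (x : ℂ) ^ (-(s + 1))) =
        -s * ((Q x : ℂ) * (x : ℂ) ^ (-(s + 1))) := fun x ↦ by ring
    simp_rw [h2, integral_const_mul] at h
    rw [sub_zero, zero_sub, neg_mul, neg_inj] at h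
    exact h.symm
  · have hx0 : x ≠ 0 := by have : (1 : ℝ) < x := hx; linarith
    have h3 := hasDerivAt_ofReal_cpow_const hx0 (neg_ne_zero.2 hs0)
    rwa [neg_add']
  · refine IntegrableOn.congr_fun (hQi.const_mul (-s)) (fun x _ ↦ ?_) measurableSet_Ioi
    simp only [Pi.mul_apply]
    ring

lemma exists_abs_le_of_tendsto {q : ℝ → ℝ} (hq : ContinuousOn q (Ici 1))
    (hq0 : Tendsto q atTop (nhds 0)) : ∃ D, ∀ x, |q (max 1 x)| ≤ D := by
  have h1 : ∀ᶠ x in atTop, |q x| < 1 := by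
    have := hq0.abs
    rw [abs_zero] at this
    exact this.eventually_lt_const one_pos
  obtain ⟨X, hX⟩ := eventually_atTop.1 h1
  obtain ⟨D, hD⟩ := isCompact_Icc.exists_bound_of_continuousOn
    (hq.mono (Icc_subset_Ici_self : Icc 1 X ⊆ Ici 1))
  refine ⟨max 1 D, fun x ↦ ?_⟩
  rcases le_total X (max 1 x) with h | h
  · exact (hX _ h).le.trans (le_max_left _ _)
  · exact (hD _ ⟨le_max_left _ _, h⟩).trans (le_max_right _ _)

theorem mellin_minus_prime_sum_extends_pm_one_RH
    (hRH : RiemannHypothesis)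
    (q : ℝ → ℝ) (hq : ContinuousOn q (Set.Ici 1))
    (hq0 : Tendsto q atTop (nhds 0)) :
    ∃ χ : ℕ → ℂ,
      CompletelyMultiplicative χ ∧
      (∀ n : ℕ, 1 ≤ n → χ n ∈ ({1, -1} : Set ℂ)) ∧
      ∃ G : ℂ → ℂ, AnalyticOnNhd ℂ G {s : ℂ | 1 / 2 < s.re} ∧
        ∀ s : ℂ, 1 < s.re →
          G s = (∫ x in Set.Ioi (1 : ℝ), (q x : ℂ) * (x : ℂ) ^ (-s)) -
            ∑' p : Nat.Primes, χ p * (p : ℂ) ^ (-s) * (Real.log p : ℂ) := by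
  obtain ⟨D, hD⟩ := exists_abs_le_of_tendsto hq hq0
  -- Only the values of `q` on `[1, ∞)` matter; `q'` extends them continuously to the line.
  set q' : ℝ → ℝ := fun x ↦ q (max 1 x) with hq'
  have hD0 : 0 ≤ D := (abs_nonneg _).trans (hD 0)
  have hqc : Continuous q' := hq.comp_continuous (by fun_prop) fun x ↦ mem_Ici.2 (le_max_left _ _)
  set Q : ℝ → ℝ := fun x ↦ ∫ y in (1 : ℝ)..x, q' y with hQ
  have hQsub : ∀ a b, Q b - Q a = ∫ y in a..b, q' y := fun a b ↦
    intervalIntegral.integral_interval_sub_left (hqc.intervalIntegrable _ _)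
      (hqc.intervalIntegrable _ _)
  have hQc : Continuous Q := intervalIntegral.continuous_primitive
    (fun a b ↦ hqc.intervalIntegrable a b) 1
  have hr : ∀ᶠ n : ℕ in atTop, |Q (n + 1 : ℕ) - Q n| ≤ 1 := by
    have h1 : ∀ᶠ x in atTop, |q x| < 1 := by
      have := hq0.abs
      rw [abs_zero] at this
      exact this.eventually_lt_const one_pos
    obtain ⟨X, hX⟩ := eventually_atTop.1 h1
    filter_upwards [eventually_ge_atTop ⌈X⌉₊] with n hn
    have hnX : X ≤ n := Nat.ceil_le.1 hn
    rw [hQsub]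
    have := intervalIntegral.norm_integral_le_of_norm_le_const (a := (n : ℝ))
      (b := ((n + 1 : ℕ) : ℝ)) (f := q') (C := 1) (fun x hx ↦ by
        rw [uIoc_of_le (by push_cast; linarith)] at hx
        exact (hX _ (hnX.trans (hx.1.le.trans (le_max_right 1 x)))).le)
    simpa using this
  set ε : ℕ → ℝ := greedySign primeLog (fun n ↦ Q n) with hεdef
  have hε : ∀ n, ε n = 1 ∨ ε n = -1 := greedySign_eq _ _
  set S : ℕ → ℝ := fun n ↦ ∑ k ∈ Finset.Icc 1 n, ε k * primeLog k with hS
  have hbound : ∀ α : ℝ, 1 / 2 < α → α ≤ 1 →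
      ∃ C, ∀ t : ℝ, 1 < t → ‖((Q t - S ⌊t⌋₊ : ℝ) : ℂ)‖ ≤ C * t ^ α := by
    intro α hα hα1
    obtain ⟨C, hC, h⟩ := abs_greedyError_primeLog_le hRH (Q := fun n ↦ Q n) hr hα hα1
    refine ⟨D + C, fun t ht ↦ ?_⟩
    have hfl : 1 ≤ ⌊t⌋₊ := Nat.le_floor (by simpa using ht.le)
    have h1 := h _ hfl
    rw [greedyError_eq] at h1
    have h2 : (⌊t⌋₊ : ℝ) ≤ t := Nat.floor_le (by linarith)
    have h3 : |Q t - Q ⌊t⌋₊| ≤ D * 1 := by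
      rw [hQsub]
      refine (abs_primitive_le hD _ _).trans ?_
      gcongr
      rw [abs_of_nonneg (by linarith)]
      linarith [Nat.lt_floor_add_one t]
    have h4 : (⌊t⌋₊ : ℝ) ^ α ≤ t ^ α := Real.rpow_le_rpow (by positivity) h2 (by linarith)
    have h5 : (1 : ℝ) ≤ t ^ α := Real.one_le_rpow ht.le (by linarith)
    rw [norm_real, Real.norm_eq_abs]
    calc |Q t - S ⌊t⌋₊| = |(Q t - Q ⌊t⌋₊) - (S ⌊t⌋₊ - Q ⌊t⌋₊)| := by ring_nf
      _ ≤ |Q t - Q ⌊t⌋₊| + |S ⌊t⌋₊ - Q ⌊t⌋₊| := abs_sub _ _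
      _ ≤ D * t ^ α + C * t ^ α := by
        refine add_le_add (h3.trans (by gcongr)) (h1.trans (by gcongr))
      _ = _ := by ring
  have hSm : Measurable fun t : ℝ ↦ ((S ⌊t⌋₊ : ℝ) : ℂ) :=
    ((measurable_from_nat (f := fun n ↦ ((S n : ℝ) : ℂ))).comp Nat.measurable_floor)
  have hQm : Measurable fun t : ℝ ↦ (Q t : ℂ) := by
    have := hQc.measurable
    fun_prop
  have hm : Measurable fun t : ℝ ↦ ((Q t - S ⌊t⌋₊ : ℝ) : ℂ) := by
    simpa only [ofReal_sub] using! hQm.sub hSm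
  refine ⟨mulExt ε, completelyMultiplicative_mulExt ε, fun n hn ↦ mulExt_mem hε hn,
    fun s ↦ s * ∫ t in Ioi (1 : ℝ), ((Q t - S ⌊t⌋₊ : ℝ) : ℂ) * (t : ℂ) ^ (-(s + 1)), ?_, ?_⟩
  · refine DifferentiableOn.analyticOnNhd (fun s hs ↦ ?_) (isOpen_lt continuous_const continuous_re)
    have hs' : 1 / 2 < s.re := hs
    obtain ⟨α, h1, h2⟩ := exists_between (lt_min hs' (by norm_num : (1 / 2 : ℝ) < 1))
    obtain ⟨C, hC⟩ := hbound α h1 (h2.le.trans (min_le_right _ _))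
    exact (differentiableAt_id.mul (differentiableAt_integral_mul_cpow hm hC
      (h2.trans_le (min_le_left _ _)))).differentiableWithinAt
  · intro s hs
    have hqq : ∫ x in Ioi (1 : ℝ), (q x : ℂ) * (x : ℂ) ^ (-s) =
        ∫ x in Ioi (1 : ℝ), (q' x : ℂ) * (x : ℂ) ^ (-s) := by
      refine setIntegral_congr_fun measurableSet_Ioi fun x hx ↦ ?_
      have hx1 : (1 : ℝ) < x := hx
      simp only [hq', max_eq_right hx1.le]
    rw [hqq, integral_eq_mul_primitive hqc hD hs, tsum_primes_eq hε hs, ← mul_sub]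
    obtain ⟨C, hC⟩ := hbound 1 (by norm_num) le_rfl
    have i1 : IntegrableOn (fun t : ℝ ↦ (Q t : ℂ) * (t : ℂ) ^ (-(s + 1))) (Ioi 1) :=
      integrableOn_mul_cpow hQm (α := 1) (C := D) (fun t ht ↦ by
        rw [norm_real, Real.norm_eq_abs, Real.rpow_one]
        refine (abs_primitive_le hD 1 t).trans ?_
        gcongr
        rw [abs_of_pos (by linarith)]
        linarith) hs
    have i2 := integrableOn_mul_cpow hm hC hs
    have i3 : IntegrableOn (fun t : ℝ ↦ ((S ⌊t⌋₊ : ℝ) : ℂ) * (t : ℂ) ^ (-(s + 1))) (Ioi 1) := by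
      refine (i1.sub i2).congr_fun (fun t _ ↦ ?_) measurableSet_Ioi
      simp only [Pi.sub_apply]
      push_cast
      ring
    have hsub := integral_sub i1 i3
    dsimp only
    rw [← hsub]
    congr 2
    funext t
    push_cast
    ring
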